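/- For λ, μ ∈ K^× with λμ ≠ 1, let II²⁴_{λ,μ} be the evolution algebra on K² with natural basis {e₁, e₂} and products e₁² = e₁ + μe₂, e₂² = λe₁ + e₂, e₁e₂ = e₂e₁ = 0. Then for λ, μ, λ', μ' ∈ K^× with λμ ≠ 1 and λ'μ' ≠ 1, the algebras II²⁴_{λ,μ} and II²⁴_{λ',μ'} are isomorphic as K-algebras if and only if (λ', μ') = (λ, μ) or (λ', μ') = (μ, λ). -/

import Mathlib

/-!
Suppose the squares `f k * f k` of a natural basis `f` are linearly independent, and let `φ` be an
isomorphism from an algebra with natural basis `e`. For `i ≠ j` the product `φ (e i) * φ (e j) = 0`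
is a combination of these squares, so `φ (e i)` and `φ (e j)` have disjoint supports with respect to
`f`. A linear equivalence with this property is monomial: `φ (e i) = c i • f (σ i)`. Comparing
coordinates of `φ (e i * e i)`, the structure matrices `M` of `e` and `N` of `f` satisfy
`c j * M i j = c i ^ 2 * N (σ i) (σ j)`. If both diagonals consist of ones then `c i = c i ^ 2`,
hence `c i = 1`, and `M` is `N` up to the permutation `σ`.
-/

open Module

section LinearEquiv

variable {ι κ K V W : Type*} [CommRing K] [AddCommGroup V] [Module K V] [AddCommGroup W]
  [Module K W]

theorem repr_map_apply_of_forall_ne (e : Basis ι K V) (f : Basis κ K W) (φ : V →ₗ[K] W) {i : ι}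
    {k : κ} (h : ∀ j ≠ i, f.repr (φ (e j)) k = 0) (x : V) :
    f.repr (φ x) k = f.repr (φ (e i)) k * e.repr x i := by
  suffices f.coord k ∘ₗ φ = f.repr (φ (e i)) k • e.coord i from LinearMap.congr_fun this x
  refine e.ext fun j => ?_
  rcases eq_or_ne j i with rfl | hji
  · simp
  · simp [h j hji, hji]

theorem repr_map_apply_of_map_eq_smul {e : Basis ι K V} {f : Basis κ K W} {φ : V →ₗ[K] W}
    {σ : ι ≃ κ} {c : ι → K} (h : ∀ i, φ (e i) = c i • f (σ i)) (x : V) (j : ι) :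
    f.repr (φ x) (σ j) = c j * e.repr x j := by
  rw [repr_map_apply_of_forall_ne e f φ (i := j) fun i hij => by simp [h, hij]]
  simp [h]

section Monomial

variable {e : Basis ι K V} {f : Basis κ K W} {φ : V ≃ₗ[K] W} {τ : κ → ι}

theorem repr_map_mul_repr_symm_eq_one (h : ∀ k, ∀ i ≠ τ k, f.repr (φ (e i)) k = 0) (k : κ) :
    f.repr (φ (e (τ k))) k * e.repr (φ.symm (f k)) (τ k) = 1 := by
  simpa using (repr_map_apply_of_forall_ne e f φ.toLinearMap (h k) (φ.symm (f k))).symm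

theorem bijective_of_repr_map_eq_zero [Nontrivial K]
    (h : ∀ k, ∀ i ≠ τ k, f.repr (φ (e i)) k = 0) :
    Function.Bijective τ := by
  constructor
  · intro k l hkl
    by_contra hne
    have hunit : IsUnit (f.repr (φ (e (τ l))) l) :=
      .of_mul_eq_one _ (repr_map_mul_repr_symm_eq_one h l)
    have hzero : f.repr (φ (e (τ l))) l * e.repr (φ.symm (f k)) (τ l) = 0 := by
      simpa [Finsupp.single_eq_of_ne (Ne.symm hne)] using
        (repr_map_apply_of_forall_ne e f φ.toLinearMap (h l) (φ.symm (f k))).symm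
    refine right_ne_zero_of_mul_eq_one (repr_map_mul_repr_symm_eq_one h k) ?_
    rw [hkl, hunit.mul_right_eq_zero.1 hzero]
  · intro i
    have hφe : f.repr (φ (e i)) ≠ 0 :=
      f.repr.map_ne_zero_iff.2 (φ.map_ne_zero_iff.2 (e.ne_zero i))
    obtain ⟨k, hk⟩ := Finsupp.ne_iff.1 hφe
    exact ⟨k, by_contra fun hik => hk (h k i (Ne.symm hik))⟩

theorem exists_map_eq_units_smul_of_repr_map_eq_zero [Nontrivial K]
    (h : ∀ k, ∀ i ≠ τ k, f.repr (φ (e i)) k = 0) :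
    ∃ (σ : ι ≃ κ) (c : ι → Kˣ), ∀ i, φ (e i) = c i • f (σ i) := by
  let τEquiv : κ ≃ ι := Equiv.ofBijective τ (bijective_of_repr_map_eq_zero h)
  let coeff (k : κ) : Kˣ := Units.mkOfMulEqOne _ _ (repr_map_mul_repr_symm_eq_one h k)
  refine ⟨τEquiv.symm, fun i => coeff (τEquiv.symm i), τEquiv.forall_congr_right.1 fun k => ?_⟩
  refine f.ext_elem fun l => ?_
  rcases eq_or_ne l k with rfl | hlk
  · simp [τEquiv, coeff, Units.smul_def]
  · simp [τEquiv, Units.smul_def, hlk, h l (τ k) ((bijective_of_repr_map_eq_zero h).1.ne hlk.symm)]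

end Monomial

theorem exists_map_eq_units_smul_of_repr_mul_repr_eq_zero [IsDomain K] (e : Basis ι K V)
    (f : Basis κ K W) (φ : V ≃ₗ[K] W)
    (h : Pairwise fun i j => f.repr (φ (e i)) * f.repr (φ (e j)) = 0) :
    ∃ (σ : ι ≃ κ) (c : ι → Kˣ), ∀ i, φ (e i) = c i • f (σ i) := by
  have exists_repr_map_ne_zero (k : κ) : ∃ i, f.repr (φ (e i)) k ≠ 0 := by
    by_contra! hk
    have hzero : f.coord k ∘ₗ φ.toLinearMap = 0 := e.ext hk
    simpa using LinearMap.congr_fun hzero (φ.symm (f k))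
  choose τ hτ using exists_repr_map_ne_zero
  refine exists_map_eq_units_smul_of_repr_map_eq_zero (τ := τ) fun k i hi => ?_
  exact (mul_eq_zero.1 (DFunLike.congr_fun (h hi) k)).resolve_right (hτ k)

end LinearEquiv

section EvolutionAlgebra

variable {ι κ K A B : Type*} [CommRing K]
  [NonUnitalNonAssocRing A] [Module K A]
  [NonUnitalNonAssocRing B] [Module K B]

/-- A basis is natural when distinct members multiply to zero; an evolution algebra is an algebra
admitting such a basis. -/
def IsNaturalBasis (e : Basis ι K A) : Prop :=
  Pairwise fun i j => e i * e j = 0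

/-- The structure matrix of an evolution algebra relative to a natural basis: its `i`-th row holds
the coordinates of `e i * e i`. The paper's `II²⁴_{λ,μ}` has structure matrix `!![1, μ; λ, 1]`. -/
noncomputable def structureMatrix (e : Basis ι K A) : Matrix ι ι K :=
  fun i j => e.repr (e i * e i) j

theorem structureMatrix_eq_of_mul_self_eq_sum [Fintype ι] {e : Basis ι K A} {M : Matrix ι ι K}
    (h : ∀ i, e i * e i = ∑ j, M i j • e j) : structureMatrix e = M := by
  ext i j
  rw [structureMatrix, h, e.repr_sum_self]

theorem linearIndependent_mul_self_of_det_ne_zero [IsDomain K] [Fintype ι] [DecidableEq ι]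
    {e : Basis ι K A} (h : (structureMatrix e).det ≠ 0) :
    LinearIndependent K fun i => e i * e i :=
  .of_comp e.equivFun.toLinearMap (Matrix.linearIndependent_rows_of_det_ne_zero h)

variable [SMulCommClass K A A]

theorem IsNaturalBasis.basis_mul {e : Basis ι K A} (he : IsNaturalBasis e) (i : ι) (y : A) :
    e i * y = e.repr y i • (e i * e i) := by
  suffices LinearMap.mulLeft K (e i) = (e.coord i).smulRight (e i * e i) from
    LinearMap.congr_fun this y
  refine e.ext fun j => ?_
  rcases eq_or_ne i j with rfl | hij
  · simp
  · simp [he hij, hij]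

variable [IsScalarTower K A A] [SMulCommClass K B B] [IsScalarTower K B B]

theorem IsNaturalBasis.mul_eq_linearCombination {e : Basis ι K A} (he : IsNaturalBasis e)
    (x y : A) :
    x * y = Finsupp.linearCombination K (fun i => e i * e i) (e.repr x * e.repr y) := by
  have single_mul_repr (i : ι) (r : K) :
      Finsupp.single i r * e.repr y = Finsupp.single i (r * e.repr y i) := by
    ext k
    rcases eq_or_ne k i with rfl | hki <;> simp [*]
  suffices ∀ a : ι →₀ K, Finsupp.linearCombination K e a * y =
      Finsupp.linearCombination K (fun i => e i * e i) (a * e.repr y) by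
    simpa using this (e.repr x)
  intro a
  induction a using Finsupp.induction_linear with
  | zero => simp
  | add a b ha hb => simp [add_mul, ha, hb]
  | single i r =>
    rw [single_mul_repr, Finsupp.linearCombination_single, Finsupp.linearCombination_single,
      smul_mul_assoc, he.basis_mul i y, mul_smul]

theorem IsNaturalBasis.repr_mul_repr_eq_zero {f : Basis κ K B} (hf : IsNaturalBasis f)
    (hsq : LinearIndependent K fun k => f k * f k) {x y : B} (hxy : x * y = 0) :
    f.repr x * f.repr y = 0 :=
  linearIndependent_iff.1 hsq _ (by rw [← hf.mul_eq_linearCombination, hxy])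

theorem forall_map_mul_iff_forall_map_basis_mul (e : Basis ι K A) (φ : A →ₗ[K] B) :
    (∀ x y, φ (x * y) = φ x * φ y) ↔ ∀ i j, φ (e i * e j) = φ (e i) * φ (e j) :=
  (LinearMap.ext_iff₂ (f := (LinearMap.mul K A).compr₂ φ)
    (g := (LinearMap.mul K B).compl₁₂ φ φ)).symm.trans (LinearMap.ext_iff_basis e e)

theorem IsNaturalBasis.forall_map_mul_iff_of_map_eq_smul {e : Basis ι K A} {f : Basis κ K B}
    (he : IsNaturalBasis e) (hf : IsNaturalBasis f) {φ : A →ₗ[K] B} {σ : ι ≃ κ} {c : ι → K}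
    (h : ∀ i, φ (e i) = c i • f (σ i)) :
    (∀ x y, φ (x * y) = φ x * φ y) ↔
      ∀ i j, c j * structureMatrix e i j = c i ^ 2 * structureMatrix f (σ i) (σ j) := by
  have map_mul_of_ne {i j} (hij : i ≠ j) : φ (e i * e j) = φ (e i) * φ (e j) := by
    simp [h, smul_mul_smul_comm, he hij, hf (σ.injective.ne hij)]
  have map_mul_self_iff (i : ι) : φ (e i * e i) = φ (e i) * φ (e i) ↔
      ∀ j, c j * structureMatrix e i j = c i ^ 2 * structureMatrix f (σ i) (σ j) := by
    rw [f.ext_elem_iff, ← σ.forall_congr_right]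
    simp [repr_map_apply_of_map_eq_smul h, h, structureMatrix, smul_mul_smul_comm, pow_two]
  rw [forall_map_mul_iff_forall_map_basis_mul e]
  refine forall_congr' fun i => Iff.trans ⟨fun hi => hi i, fun hi j => ?_⟩ (map_mul_self_iff i)
  rcases eq_or_ne i j with rfl | hij
  exacts [hi, map_mul_of_ne hij]

theorem IsNaturalBasis.exists_mul_equiv_iff_exists_units [IsDomain K] {e : Basis ι K A}
    {f : Basis κ K B} (he : IsNaturalBasis e) (hf : IsNaturalBasis f)
    (hsq : LinearIndependent K fun k => f k * f k) :
    (∃ φ : A ≃ₗ[K] B, ∀ x y, φ (x * y) = φ x * φ y) ↔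
      ∃ (σ : ι ≃ κ) (c : ι → Kˣ), ∀ i j,
        (c j : K) * structureMatrix e i j = (c i : K) ^ 2 * structureMatrix f (σ i) (σ j) := by
  constructor
  · rintro ⟨φ, hφ⟩
    obtain ⟨σ, c, hc⟩ := exists_map_eq_units_smul_of_repr_mul_repr_eq_zero e f φ fun i j hij =>
      hf.repr_mul_repr_eq_zero hsq (by rw [← hφ, he hij, map_zero])
    exact ⟨σ, c, (he.forall_map_mul_iff_of_map_eq_smul hf (φ := φ.toLinearMap) hc).1 hφ⟩
  · rintro ⟨σ, c, hc⟩
    let φ : A ≃ₗ[K] B := e.equiv ((f.reindex σ.symm).unitsSMul c) (Equiv.refl ι)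
    have hφ (i : ι) : φ (e i) = (c i : K) • f (σ i) := by
      simp [φ, Basis.unitsSMul_apply, Units.smul_def]
    exact ⟨φ, (he.forall_map_mul_iff_of_map_eq_smul hf (φ := φ.toLinearMap) hφ).2 hc⟩

theorem II24_iso_iff_general [IsDomain K] {e : Basis ι K A} {f : Basis κ K B}
    (he : IsNaturalBasis e) (hf : IsNaturalBasis f)
    (hsq : LinearIndependent K fun k => f k * f k)
    (he_diag : ∀ i, structureMatrix e i i = 1) (hf_diag : ∀ k, structureMatrix f k k = 1) :
    (∃ φ : A ≃ₗ[K] B, ∀ x y, φ (x * y) = φ x * φ y) ↔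
      ∃ σ : ι ≃ κ, (structureMatrix f).submatrix σ σ = structureMatrix e := by
  rw [he.exists_mul_equiv_iff_exists_units hf hsq]
  refine exists_congr fun σ => ⟨?_, fun h => ⟨1, fun i j => by simp [← h]⟩⟩
  rintro ⟨c, hc⟩
  have c_eq_one (i : ι) : c i = 1 := by
    have hsquare : (c i : K) = (c i : K) ^ 2 := by simpa [he_diag, hf_diag] using hc i i
    exact left_eq_mul.1 ((Units.ext hsquare).trans (pow_two (c i)))
  ext i j
  simpa [c_eq_one] using (hc i j).symm

end EvolutionAlgebra

theorem exists_perm_submatrix_eq_iff_of_fin_two {α : Type*} {a b c b' c' : α} :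
    (∃ σ : Equiv.Perm (Fin 2), !![a, b'; c', a].submatrix σ σ = !![a, b; c, a]) ↔
      (c' = c ∧ b' = b) ∨ (c' = b ∧ b' = c) := by
  have perm_eq : ∀ σ : Equiv.Perm (Fin 2), σ = 1 ∨ σ = Equiv.swap 0 1 := by decide
  have exists_perm_iff {p : Equiv.Perm (Fin 2) → Prop} :
      (∃ σ, p σ) ↔ p 1 ∨ p (Equiv.swap 0 1) := by
    refine ⟨fun ⟨σ, hσ⟩ => ?_, fun h => h.elim (⟨_, ·⟩) (⟨_, ·⟩)⟩
    rcases perm_eq σ with rfl | rfl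
    exacts [.inl hσ, .inr hσ]
  simp [exists_perm_iff, ← Matrix.ext_iff, Fin.forall_fin_two, and_comm]

/-- For `λ, μ ∈ K^×` with `λμ ≠ 1`, `II²⁴_{λ,μ}` is the evolution algebra
with natural basis `{e₁, e₂}` and products `e₁² = e₁ + μe₂`, `e₂² = λe₁ + e₂`,
`e₁e₂ = e₂e₁ = 0`.  Then `II²⁴_{λ,μ} ≅ II²⁴_{λ',μ'}` as `K`-algebras iff
`(λ', μ') = (λ, μ)` or `(λ', μ') = (μ, λ)`. -/
theorem II24_iso_iff {K A B : Type*} [Field K]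
    [NonUnitalNonAssocCommRing A] [Module K A] [SMulCommClass K A A] [IsScalarTower K A A]
    [NonUnitalNonAssocCommRing B] [Module K B] [SMulCommClass K B B] [IsScalarTower K B B]
    (lam mu lam' mu' : K) (hlam : lam ≠ 0) (hmu : mu ≠ 0)
    (hlam' : lam' ≠ 0) (hmu' : mu' ≠ 0)
    (h1 : lam * mu ≠ 1) (h1' : lam' * mu' ≠ 1)
    (e : Module.Basis (Fin 2) K A) (hen : ∀ i j : Fin 2, i ≠ j → e i * e j = 0)
    (he0 : e 0 * e 0 = e 0 + mu • e 1) (he1 : e 1 * e 1 = lam • e 0 + e 1)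
    (f : Module.Basis (Fin 2) K B) (hfn : ∀ i j : Fin 2, i ≠ j → f i * f j = 0)
    (hf0 : f 0 * f 0 = f 0 + mu' • f 1) (hf1 : f 1 * f 1 = lam' • f 0 + f 1) :
    (∃ φ : A ≃ₗ[K] B, ∀ x y : A, φ (x * y) = φ x * φ y) ↔
      (lam' = lam ∧ mu' = mu) ∨ (lam' = mu ∧ mu' = lam) := by
  have hE : structureMatrix e = !![1, mu; lam, 1] :=
    structureMatrix_eq_of_mul_self_eq_sum (by simp [Fin.forall_fin_two, he0, he1])
  have hF : structureMatrix f = !![1, mu'; lam', 1] :=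
    structureMatrix_eq_of_mul_self_eq_sum (by simp [Fin.forall_fin_two, hf0, hf1])
  have hsq : LinearIndependent K fun k => f k * f k :=
    linearIndependent_mul_self_of_det_ne_zero <| by
      simpa [hF, Matrix.det_fin_two, sub_eq_zero, mul_comm mu'] using h1'.symm
  rw [II24_iso_iff_general hen hfn hsq (by simp [hE, Fin.forall_fin_two])
    (by simp [hF, Fin.forall_fin_two]), hE, hF, exists_perm_submatrix_eq_iff_of_fin_two]
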